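/- The finite representation property holds for the signature of composition and the antidomain operations: if A is finite and satisfies the axioms (1)–(9), then A is representable by n-ary partial functions on a finite base X, and moreover the base may be taken with |X| ≤ |A|³; that is, there exist a finite set X with at most |A|³ elements, an equivalence relation E on X, and an injective map θ from A into the n-ary partial functions on X satisfying conditions (i)–(iii) of the representation theorem (every θ(a) relates only E-equivalent points, θ preserves composition, and θ(Aᵢa) is defined at x with value xᵢ iff x₁,…,xₙ are pairwise E-equivalent and θ(a) is undefined at x). -/

import Mathlib

/-!
Call a map `t ↦ ⟨Ac⟩∘t` a test. Substituting `b = 0` into the twisted law turns its `D`-chain into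
`⟨a⟩∘πᵢ`, so that `⟨a⟩∘Aᵢb = ⟨A(⟨a⟩∘b)⟩∘(⟨a⟩∘πᵢ)`. From this and the quasiequation, tests are
idempotent, commute, are closed under composition, and `⟨Da⟩`, `⟨Aa⟩` are complementary: they behave
as a Boolean algebra of restrictions.

Call `e` an atom if `⟨Ae⟩∘z ≠ 0` forces `⟨Ae⟩∘⟨Az⟩∘t = 0` for all `t`, that is, the test of `e` lies
below `⟨Dz⟩` or below `⟨Az⟩` for every `z`. By finiteness, among the tests separating two
distinct elements there is one with a largest kernel, and it is given by an atom
(`exists_isAtomIdx`).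

The base consists of the pairs `(e, a)` with `e` an atom, `⟨Ae⟩∘a = a` and `a ≠ 0`, hence has at most
`|A|²` elements; two points are equivalent when their first components agree. An element `a` of the
algebra sends `((e, x₁), …, (e, xₙ))` to `(e, ⟨x⟩∘a)` when `⟨x⟩∘a ≠ 0`, and is undefined otherwise.
Superassociativity gives preservation of composition, the twisted law gives the antidomain
condition, and evaluation at the restricted projections `(e, Aᵢe)` gives injectivity.
-/

universe u


/-- Composition of `n`-ary partial functions: `⟨f₁,…,fₙ⟩∘g` is defined at `x`
iff each `fᵢ(x)` is defined and `g` is defined at `(f₁(x),…,fₙ(x))`,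
in which case its value is `g(f₁(x),…,fₙ(x))`. -/
def nComp {n : ℕ} {X : Type*} (f : Fin n → ((Fin n → X) →. X))
    (g : (Fin n → X) →. X) : (Fin n → X) →. X := fun x =>
  Part.mk (∃ h : ∀ i, (f i x).Dom, (g fun i => (f i x).get (h i)).Dom)
    (fun h => (g fun i => (f i x).get (h.choose i)).get h.choose_spec)

/-- The `i`-th domain operation: `Dᵢf` is defined at `x` with value `xᵢ` iff `f(x)` is defined. -/
def nDom {n : ℕ} {X : Type*} (i : Fin n) (f : (Fin n → X) →. X) :
    (Fin n → X) →. X := fun x => Part.mk (f x).Dom (fun _ => x i)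

/-- The `i`-th antidomain operation: `Aᵢf` is defined at `x` with value `xᵢ` iff `f(x)` is undefined. -/
def nAnti {n : ℕ} {X : Type*} (i : Fin n) (f : (Fin n → X) →. X) :
    (Fin n → X) →. X := fun x => Part.mk (¬ (f x).Dom) (fun _ => x i)


/-- An algebra with an `(n+1)`-ary composition `⟨a₁,…,aₙ⟩∘b` and
`n` antidomain operations `A₁,…,Aₙ`. -/
structure MAlg (n : ℕ) (A : Type*) where
  comp : (Fin n → A) → A → A
  anti : Fin n → A → A

namespace MAlg

variable {n : ℕ} {A : Type*} [Inhabited A]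

/-- `⟨Aa⟩ = (A₁a,…,Aₙa)`. -/
def avec (M : MAlg n A) (a : A) : Fin n → A := fun i => M.anti i a

/-- `0 := ⟨Ab⟩∘b` (independent of `b` by axiom (3)). -/
def zero (M : MAlg n A) : A := M.comp (M.avec default) default

/-- `πᵢ := Aᵢ0`. -/
def pi (M : MAlg n A) (i : Fin n) : A := M.anti i M.zero

/-- `Dᵢa := Aᵢ(Aᵢa)`. -/
def dom (M : MAlg n A) (i : Fin n) (a : A) : A := M.anti i (M.anti i a)

/-- `⟨Da⟩ = (D₁a,…,Dₙa)`. -/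
def dvec (M : MAlg n A) (a : A) : Fin n → A := fun i => M.dom i a

/-- The chain `⟨Da₁⟩∘(⟨Da₂⟩∘(⋯∘(⟨Daₙ⟩∘t)))`. -/
def dchain (M : MAlg n A) (a : Fin n → A) (t : A) : A :=
  (List.ofFn a).foldr (fun u acc => M.comp (M.dvec u) acc) t

/-- Axioms (1)–(9). -/
structure Ax (M : MAlg n A) : Prop where
  /-- (1) superassociativity -/
  ax1 : ∀ (a b : Fin n → A) (c : A),
    M.comp (fun i => M.comp a (b i)) c = M.comp a (M.comp b c)
  /-- (2) `⟨π₁,…,πₙ⟩∘a = a` -/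
  ax2 : ∀ a : A, M.comp M.pi a = a
  /-- (3) `⟨Aa⟩∘a = ⟨Ab⟩∘b` -/
  ax3 : ∀ a b : A, M.comp (M.avec a) a = M.comp (M.avec b) b
  /-- (4) `⟨a₁,…,0,…,aₙ⟩∘b = 0` with `0` in any position -/
  ax4 : ∀ (a : Fin n → A) (i : Fin n) (b : A),
    M.comp (Function.update a i M.zero) b = M.zero
  /-- (5) `⟨a⟩∘0 = 0` -/
  ax5 : ∀ a : Fin n → A, M.comp a M.zero = M.zero
  /-- (6) the twisted laws for antidomain -/
  ax6 : ∀ (a : Fin n → A) (i : Fin n) (b : A),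
    M.comp a (M.anti i b) = M.comp (M.avec (M.comp a b)) (M.dchain a (a i))
  /-- (7) the quasiequation -/
  ax7 : ∀ a b c : A,
    M.comp (M.dvec a) b = M.comp (M.dvec a) c →
    M.comp (M.avec a) b = M.comp (M.avec a) c → b = c
  /-- (8) `⟨Da⟩∘a = a` -/
  ax8 : ∀ a : A, M.comp (M.dvec a) a = a
  /-- (9) `Aᵢ(Aⱼa) = Aᵢ(Aₖa)` -/
  ax9 : ∀ (i j k : Fin n) (a : A), M.anti i (M.anti j a) = M.anti i (M.anti k a)

end MAlg

namespace MAlg.Ax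

variable {n : ℕ} {A : Type*} [Inhabited A] {M : MAlg n A}

/-! ### The Boolean behaviour of tests -/

theorem comp_eq_zero (hM : M.Ax) {v : Fin n → A} {i : Fin n} (h : v i = M.zero) (b : A) :
    M.comp v b = M.zero := by
  have := hM.ax4 v i b
  rw [← h, Function.update_eq_self] at this
  exact this.trans h

theorem anti_self (hM : M.Ax) (a : A) : M.comp (M.avec a) a = M.zero := hM.ax3 a _

theorem dvec_eq (hM : M.Ax) (j : Fin n) (a : A) : M.dvec a = M.avec (M.anti j a) := by
  funext i
  exact hM.ax9 i i j a

theorem avec_zero_comp (hM : M.Ax) (a : A) : M.comp (M.avec M.zero) a = a := hM.ax2 a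

/-- The case `b = 0` of the twisted law. -/
theorem comp_pi (hM : M.Ax) (v : Fin n → A) (i : Fin n) :
    M.comp v (M.pi i) = M.dchain v (v i) := by
  have := hM.ax6 v i M.zero
  rwa [hM.ax5, hM.avec_zero_comp] at this

theorem twist (hM : M.Ax) (v : Fin n → A) (i : Fin n) (b : A) :
    M.comp v (M.anti i b) = M.comp (M.avec (M.comp v b)) (M.comp v (M.pi i)) := by
  rw [hM.ax6, hM.comp_pi]

theorem avec_comp_pi (hM : M.Ax) (b : A) (i : Fin n) :
    M.comp (M.avec b) (M.pi i) = M.anti i b := by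
  have := hM.twist M.pi i b
  rw [hM.ax2, hM.ax2, hM.ax2] at this
  exact this.symm

theorem avec_anti (hM : M.Ax) (a b : A) (i : Fin n) :
    M.comp (M.avec a) (M.anti i b) = M.comp (M.avec (M.comp (M.avec a) b)) (M.anti i a) := by
  rw [hM.twist, hM.avec_comp_pi]

/-- A test moves past another one at the cost of changing its argument. -/
theorem avec_avec (hM : M.Ax) (a b t : A) :
    M.comp (M.avec a) (M.comp (M.avec b) t) =
      M.comp (M.avec (M.comp (M.avec a) b)) (M.comp (M.avec a) t) := by
  rw [← hM.ax1, ← hM.ax1]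
  congr 1
  funext i
  exact hM.avec_anti a b i

theorem avec_idem (hM : M.Ax) (a t : A) :
    M.comp (M.avec a) (M.comp (M.avec a) t) = M.comp (M.avec a) t := by
  rw [hM.avec_avec, hM.anti_self, hM.avec_zero_comp]

theorem avec_anti_self (hM : M.Ax) (a : A) (i : Fin n) :
    M.comp (M.avec a) (M.anti i a) = M.anti i a := by
  rw [hM.avec_anti, hM.anti_self, hM.avec_zero_comp]

theorem dvec_anti (hM : M.Ax) (a : A) (i : Fin n) :
    M.comp (M.dvec a) (M.anti i a) = M.zero := by
  rw [hM.dvec_eq i, hM.anti_self]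

theorem dvec_avec (hM : M.Ax) (hn : 1 ≤ n) (a t : A) :
    M.comp (M.dvec a) (M.comp (M.avec a) t) = M.zero := by
  rw [← hM.ax1]
  exact hM.comp_eq_zero (i := ⟨0, hn⟩) (hM.dvec_anti a _) t

theorem avec_comm (hM : M.Ax) (hn : 1 ≤ n) (a b t : A) :
    M.comp (M.avec a) (M.comp (M.avec b) t) = M.comp (M.avec b) (M.comp (M.avec a) t) := by
  apply hM.ax7 b
  · rw [hM.dvec_avec hn, hM.dvec_eq ⟨0, hn⟩, hM.avec_avec _ a, ← hM.dvec_eq ⟨0, hn⟩,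
      hM.dvec_avec hn, hM.ax5]
  · rw [hM.avec_idem, hM.avec_avec b a, hM.avec_idem, ← hM.avec_avec]

theorem dvec_comm (hM : M.Ax) (hn : 1 ≤ n) (a b t : A) :
    M.comp (M.dvec a) (M.comp (M.avec b) t) = M.comp (M.avec b) (M.comp (M.dvec a) t) := by
  rw [hM.dvec_eq ⟨0, hn⟩, hM.avec_comm hn]

theorem avec_dvec (hM : M.Ax) (hn : 1 ≤ n) (a t : A) :
    M.comp (M.avec a) (M.comp (M.dvec a) t) = M.zero := by
  rw [← hM.dvec_comm hn, hM.dvec_avec hn]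

theorem dvec_idem (hM : M.Ax) (hn : 1 ≤ n) (a t : A) :
    M.comp (M.dvec a) (M.comp (M.dvec a) t) = M.comp (M.dvec a) t := by
  rw [hM.dvec_eq ⟨0, hn⟩, hM.avec_idem]

/-- A test annihilating `u` annihilates the domain test of `u`. -/
theorem avec_dvec_of_eq_zero (hM : M.Ax) (hn : 1 ≤ n) {c u : A}
    (h : M.comp (M.avec c) u = M.zero) (t : A) :
    M.comp (M.avec c) (M.comp (M.dvec u) t) = M.zero := by
  rw [hM.dvec_eq ⟨0, hn⟩, hM.avec_avec, hM.avec_anti, h, hM.avec_zero_comp, ← hM.dvec_eq,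
    hM.dvec_avec hn]

/-- If `⟨Da⟩∘u = 0`, then the domain test of `u` lies below the test of `a`. -/
theorem dvec_absorb (hM : M.Ax) (hn : 1 ≤ n) {a u : A}
    (h : M.comp (M.dvec a) u = M.zero) (t : A) :
    M.comp (M.dvec u) (M.comp (M.avec a) t) = M.comp (M.dvec u) t := by
  have h' : ∀ s, M.comp (M.dvec a) (M.comp (M.dvec u) s) = M.zero := fun s => by
    rw [hM.dvec_eq ⟨0, hn⟩ a] at h ⊢
    exact hM.avec_dvec_of_eq_zero hn h s
  apply hM.ax7 a
  · rw [h', h']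
  · rw [hM.dvec_comm hn, hM.avec_idem]

/-- Tests are closed under composition. -/
theorem exists_avec_mul (hM : M.Ax) (hn : 1 ≤ n) (a b : A) :
    ∃ e, ∀ t, M.comp (M.avec e) t = M.comp (M.avec a) (M.comp (M.avec b) t) := by
  let j : Fin n := ⟨0, hn⟩
  -- The composite is the domain test of its own value at `π_j`.
  set u := M.comp (M.avec a) (M.anti j b) with hu
  refine ⟨M.anti j u, fun t => ?_⟩
  rw [← hM.dvec_eq]
  have ha : M.comp (M.dvec a) u = M.zero := hM.dvec_avec hn a _
  have hb : M.comp (M.dvec b) u = M.zero := by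
    rw [hu, hM.dvec_comm hn, hM.dvec_anti, hM.ax5]
  apply hM.ax7 u
  · rw [hM.dvec_idem hn, hM.dvec_absorb hn ha, hM.dvec_absorb hn hb]
  · rw [hM.avec_dvec hn, ← hM.ax1 (M.avec a), ← hM.ax1 (M.avec u)]
    exact (hM.comp_eq_zero (i := j) (hM.anti_self u) t).symm

/-! ### Atoms -/

/-- `e` is an atom index: for each `z`, the test of `e` annihilates `z` or is disjoint from the test
of `z`. The zero test is allowed; it contributes no points to the base. -/
def IsAtomIdx (M : MAlg n A) (e : A) : Prop :=
  ∀ z t, M.comp (M.avec e) z ≠ M.zero → M.comp (M.avec e) (M.comp (M.avec z) t) = M.zero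

theorem IsAtomIdx.dvec (hM : M.Ax) (hn : 1 ≤ n) {e z : A} (he : IsAtomIdx M e)
    (hz : M.comp (M.avec e) z ≠ M.zero) (t : A) :
    M.comp (M.avec e) (M.comp (M.dvec z) t) = M.comp (M.avec e) t := by
  apply hM.ax7 z
  · rw [← hM.dvec_comm hn, hM.dvec_idem hn]
  · rw [hM.avec_comm hn z e, hM.avec_dvec hn, hM.ax5, hM.avec_comm hn z e, he z t hz]

theorem exists_isAtomIdx [Fintype A] (hM : M.Ax) (hn : 1 ≤ n) {b c : A} (hbc : b ≠ c) :
    ∃ e, IsAtomIdx M e ∧ M.comp (M.avec e) b ≠ M.comp (M.avec e) c := by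
  classical
  let ker : A → Finset A := fun e => Finset.univ.filter fun z => M.comp (M.avec e) z = M.zero
  let S : Finset A := Finset.univ.filter fun e => M.comp (M.avec e) b ≠ M.comp (M.avec e) c
  have hS : S.Nonempty := ⟨M.zero, by simpa [S, hM.avec_zero_comp] using hbc⟩
  obtain ⟨e, heS, hmax⟩ := S.exists_max_image (fun e => (ker e).card) hS
  have hsep : M.comp (M.avec e) b ≠ M.comp (M.avec e) c := by simpa [S] using heS
  -- Precomposing the test of `e` with a test that still separates does not enlarge the kernel.
  have key : ∀ d, M.comp (M.avec d) (M.comp (M.avec e) b) ≠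
      M.comp (M.avec d) (M.comp (M.avec e) c) →
      ∀ s, M.comp (M.avec d) (M.comp (M.avec e) s) = M.zero → M.comp (M.avec e) s = M.zero := by
    intro d hd s hs
    obtain ⟨f, hf⟩ := hM.exists_avec_mul hn d e
    have hfS : f ∈ S := by simpa [S, hf] using hd
    have hsub : ker e ⊆ ker f := by
      intro z hz
      have hz' : M.comp (M.avec e) z = M.zero := by simpa [ker] using hz
      simp [ker, hf, hz', hM.ax5]
    have heq := Finset.eq_of_subset_of_card_le hsub (hmax f hfS)
    have : s ∈ ker e := by rw [heq]; simpa [ker, hf] using hs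
    simpa [ker] using this
  refine ⟨e, fun z t hz => ?_, hsep⟩
  by_cases h : M.comp (M.avec z) (M.comp (M.avec e) b) = M.comp (M.avec z) (M.comp (M.avec e) c)
  · have hd : M.comp (M.dvec z) (M.comp (M.avec e) b) ≠ M.comp (M.dvec z) (M.comp (M.avec e) c) :=
      fun h' => hsep (hM.ax7 z _ _ h' h)
    rw [hM.dvec_eq ⟨0, hn⟩] at hd
    apply key _ hd
    rw [← hM.dvec_eq, hM.dvec_comm hn, hM.dvec_avec hn, hM.ax5]
  · exact absurd (key z h z (by rw [hM.avec_comm hn, hM.anti_self, hM.ax5])) hz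

/-! ### The representation -/

/-- The base of the representation: pairs `(e, a)` with `e` an atom index and `a` a nonzero
element fixed by the test of `e`. -/
abbrev Base (M : MAlg n A) : Type _ :=
  {p : A × A // IsAtomIdx M p.1 ∧ M.comp (M.avec p.1) p.2 = p.2 ∧ p.2 ≠ M.zero}

/-- The second components of a tuple of points. -/
def vals (x : Fin n → Base M) : Fin n → A := fun i => (x i).1.2

theorem avec_comp_vals (hM : M.Ax) {x : Fin n → Base M} {e : A} (hx : ∀ i, (x i).1.1 = e)
    (a : A) : M.comp (M.avec e) (M.comp (vals x) a) = M.comp (vals x) a := by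
  rw [← hM.ax1]
  congr 1
  funext i
  have := (x i).2.2.1
  rwa [hx i] at this

/-- The partial function on the base represented by `a`. -/
def rep (hM : M.Ax) (hn : 1 ≤ n) (a : A) : (Fin n → Base M) →. Base M := fun x =>
  Part.mk ((∀ i j, (x i).1.1 = (x j).1.1) ∧ M.comp (vals x) a ≠ M.zero) fun h =>
    ⟨((x ⟨0, hn⟩).1.1, M.comp (vals x) a), (x ⟨0, hn⟩).2.1,
      hM.avec_comp_vals (fun i => h.1 i _) a, h.2⟩

theorem mem_rep (hM : M.Ax) (hn : 1 ≤ n) (a : A) (x : Fin n → Base M) (y : Base M) :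
    y ∈ hM.rep hn a x ↔ (∀ i j, (x i).1.1 = (x j).1.1) ∧ y.1.1 = (x ⟨0, hn⟩).1.1 ∧
      y.1.2 = M.comp (vals x) a := by
  constructor
  · rintro ⟨h, rfl⟩
    exact ⟨h.1, rfl, rfl⟩
  · rintro ⟨h1, h2, h3⟩
    exact ⟨⟨h1, fun h => y.2.2.2 (h3.trans h)⟩, Subtype.ext (Prod.ext h2.symm h3.symm)⟩

/-- The `D`-chain of the twisted law acts trivially on a tuple over a single atom. -/
theorem comp_vals_pi (hM : M.Ax) (hn : 1 ≤ n) {x : Fin n → Base M}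
    (hx : ∀ i j, (x i).1.1 = (x j).1.1) (i : Fin n) :
    M.comp (vals x) (M.pi i) = vals x i := by
  rw [hM.comp_pi, MAlg.dchain]
  have : ∀ l : List A, (∀ u ∈ l, ∃ j, u = vals x j) →
      l.foldr (fun u acc => M.comp (M.dvec u) acc) (vals x i) = vals x i := by
    intro l
    induction l with
    | nil => intro _; rfl
    | cons u l ih =>
      intro h
      rw [List.foldr_cons, ih fun v hv => h v (List.mem_cons_of_mem _ hv)]
      obtain ⟨j, rfl⟩ := h u List.mem_cons_self
      have hi : M.comp (M.avec (x i).1.1) (vals x i) = vals x i := (x i).2.2.1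
      have hj : M.comp (M.avec (x i).1.1) (vals x j) ≠ M.zero := by
        rw [hx i j]
        have h1 : M.comp (M.avec (x j).1.1) (vals x j) = vals x j := (x j).2.2.1
        rw [h1]
        exact (x j).2.2.2
      rw [← hi, hM.dvec_comm hn, IsAtomIdx.dvec hM hn (x i).2.1 hj]
  apply this
  intro u hu
  obtain ⟨j, rfl⟩ := (List.mem_ofFn' _ _).1 hu
  exact ⟨j, rfl⟩

theorem rep_injective [Fintype A] (hM : M.Ax) (hn : 1 ≤ n) :
    Function.Injective (hM.rep hn) := by
  intro a b hab
  by_contra hne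
  obtain ⟨e, he, hsep⟩ := hM.exists_isAtomIdx hn hne
  have hnz : ∀ i, M.anti i e ≠ M.zero := fun i hi => hsep <| by
    rw [hM.comp_eq_zero (v := M.avec e) hi, hM.comp_eq_zero (v := M.avec e) hi]
  let x : Fin n → Base M := fun i => ⟨(e, M.anti i e), he, hM.avec_anti_self e i, hnz i⟩
  have key : ∀ a b : A, hM.rep hn a = hM.rep hn b → M.comp (M.avec e) a ≠ M.zero →
      M.comp (M.avec e) a = M.comp (M.avec e) b := by
    intro a b hab h
    have h1 : (⟨(e, M.comp (M.avec e) a), he, hM.avec_idem e a, h⟩ : Base M) ∈ hM.rep hn a x :=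
      (hM.mem_rep hn a x _).2 ⟨fun _ _ => rfl, rfl, rfl⟩
    rw [hab, mem_rep] at h1
    exact h1.2.2
  by_cases ha : M.comp (M.avec e) a = M.zero
  · by_cases hb : M.comp (M.avec e) b = M.zero
    · exact hsep (ha.trans hb.symm)
    · exact hsep (key b a hab.symm hb).symm
  · exact hsep (key a b hab ha)

theorem mem_nComp {X : Type*} (f : Fin n → ((Fin n → X) →. X)) (g : (Fin n → X) →. X)
    (x : Fin n → X) (y : X) :
    y ∈ nComp f g x ↔ ∃ z : Fin n → X, (∀ i, z i ∈ f i x) ∧ y ∈ g z := by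
  constructor
  · rintro ⟨⟨h, h'⟩, rfl⟩
    exact ⟨_, fun i => ⟨h i, rfl⟩, ⟨h', rfl⟩⟩
  · rintro ⟨z, hz, hy⟩
    choose h hh using hz
    obtain rfl : (fun i => (f i x).get (h i)) = z := funext hh
    obtain ⟨h', rfl⟩ := hy
    exact ⟨⟨h, h'⟩, rfl⟩

theorem rep_comp (hM : M.Ax) (hn : 1 ≤ n) (a : Fin n → A) (b : A) :
    hM.rep hn (M.comp a b) = nComp (fun i => hM.rep hn (a i)) (hM.rep hn b) := by
  funext x
  apply Part.ext
  intro y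
  rw [mem_nComp]
  simp only [mem_rep]
  rw [← hM.ax1]
  constructor
  · rintro ⟨h1, h2, h3⟩
    have hnz : ∀ i, M.comp (vals x) (a i) ≠ M.zero := fun i hi =>
      y.2.2.2 (h3.trans (hM.comp_eq_zero (i := i) hi b))
    exact ⟨fun i => ⟨((x ⟨0, hn⟩).1.1, M.comp (vals x) (a i)), (x ⟨0, hn⟩).2.1,
      hM.avec_comp_vals (fun i => h1 i _) (a i), hnz i⟩, fun i => ⟨h1, rfl, rfl⟩,
      fun _ _ => rfl, h2, h3⟩
  · rintro ⟨z, hz, -, h2, h3⟩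
    refine ⟨(hz ⟨0, hn⟩).1, h2.trans (hz _).2.1, h3.trans ?_⟩
    congr 1
    funext i
    exact (hz i).2.2

theorem mem_rep_anti (hM : M.Ax) (hn : 1 ≤ n) (a : A) (i : Fin n) (x : Fin n → Base M)
    (y : Base M) : y ∈ hM.rep hn (M.anti i a) x ↔
      y = x i ∧ (∀ j k, (x j).1.1 = (x k).1.1) ∧ ¬ (hM.rep hn a x).Dom := by
  rw [mem_rep]
  constructor
  · rintro ⟨h1, h2, h3⟩
    rw [hM.twist, hM.comp_vals_pi hn h1] at h3
    have h0 : M.comp (vals x) a = M.zero := by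
      by_contra h
      have hi : M.comp (M.avec (x i).1.1) (vals x i) = vals x i := (x i).2.2.1
      apply y.2.2.2
      rw [h3, ← hi, hM.avec_comm hn]
      apply (x i).2.1
      rwa [hM.avec_comp_vals fun j => h1 j i]
    rw [h0, hM.avec_zero_comp] at h3
    exact ⟨Subtype.ext (Prod.ext (h2.trans (h1 _ _)) h3), h1, fun h => h.2 h0⟩
  · rintro ⟨rfl, h1, h2⟩
    have h0 : M.comp (vals x) a = M.zero := by
      by_contra h
      exact h2 ⟨h1, h⟩
    refine ⟨h1, h1 _ _, ?_⟩
    rw [hM.twist, hM.comp_vals_pi hn h1, h0, hM.avec_zero_comp]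
    rfl

end MAlg.Ax

/-- The finite representation property: a finite algebra satisfying axioms (1)–(9)
is representable by `n`-ary partial functions on a base of size at most `|A|³`. -/
theorem finite_representation_property {n : ℕ} (hn : 1 ≤ n) {A : Type u}
    [Inhabited A] [Fintype A] (M : MAlg n A) (hM : M.Ax) :
    ∃ (X : Type u) (_ : Fintype X), Fintype.card X ≤ (Fintype.card A) ^ 3 ∧
      ∃ (E : X → X → Prop), Equivalence E ∧
        ∃ θ : A → ((Fin n → X) →. X),
          Function.Injective θ ∧
          (∀ (a : A) (x : Fin n → X) (y : X), y ∈ θ a x →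
            (∀ i j : Fin n, E (x i) (x j)) ∧ (∀ i : Fin n, E (x i) y)) ∧
          (∀ (a : Fin n → A) (b : A),
            θ (M.comp a b) = nComp (fun i => θ (a i)) (θ b)) ∧
          (∀ (a : A) (i : Fin n) (x : Fin n → X) (y : X),
            y ∈ θ (M.anti i a) x ↔
              y = x i ∧ (∀ j k : Fin n, E (x j) (x k)) ∧ ¬ (θ a x).Dom) := by
  classical
  refine ⟨MAlg.Ax.Base M, inferInstance, ?_, fun p q => p.1.1 = q.1.1,
    ⟨fun _ => rfl, Eq.symm, Eq.trans⟩, hM.rep hn, hM.rep_injective hn, ?_, hM.rep_comp hn,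
    hM.mem_rep_anti hn⟩
  · calc Fintype.card (MAlg.Ax.Base M) ≤ Fintype.card (A × A) := Fintype.card_subtype_le _
      _ = Fintype.card A ^ 2 := by rw [Fintype.card_prod, sq]
      _ ≤ Fintype.card A ^ 3 := Nat.pow_le_pow_right Fintype.card_pos (by norm_num)
  · intro a x y hy
    rw [MAlg.Ax.mem_rep] at hy
    exact ⟨hy.1, fun i => (hy.1 i _).trans hy.2.1.symm⟩
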